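/- Let g ≥ 1, let n be an odd positive integer, and let σ be a permutation of Fin (2g+2) with exactly two fixed points such that every other orbit has exactly n elements (so n divides 2g; this models an automorphism of odd order n of a hyperelliptic surface fixing exactly two branch points). Then the subgroup of σ*-fixed elements {y ∈ J : σ* y = y} has cardinality 2^{2g/n}. (This is the statement that an odd-order automorphism of a hyperelliptic Riemann surface of genus g fixing exactly two branch points fixes exactly 2^{2g/n} two-spin structures.) -/

import Mathlib

/-!
If `x ∘ σ` and `x` differ by a constant `c`, then following `x` once around an orbit of length
`ℓ` gives `ℓ c = 0`. Hence, as soon as some orbit has length prime to `m`, a class of `J` is fixed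
by `σ*` only if its representatives are `σ`-invariant. The invariant functions are the functions
on the set of orbits, the coordinate sum maps them onto `ZMod m` (again because of the orbit of
length prime to `m`), and passing to `J` divides by the `m` constants, so that
`#J^σ = m ^ (number of orbits - 2)`.
-/

open Function MulAction

section Orbits

variable {α : Type*}

theorem minimalPeriod_eq_of_pow {n : ℕ} {σ : Equiv.Perm α} {a : α} (hn : 0 < n)
    (hpow : (σ ^ n) a = a) (hmin : ∀ k : ℕ, 0 < k → k < n → (σ ^ k) a ≠ a) :
    minimalPeriod σ a = n := by
  have hper : IsPeriodicPt σ n a := by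
    rw [IsPeriodicPt, Equiv.Perm.iterate_eq_pow]
    exact hpow
  refine (hper.minimalPeriod_le hn).eq_of_not_lt fun hlt => ?_
  refine hmin _ (hper.minimalPeriod_pos hn) hlt ?_
  rw [← Equiv.Perm.iterate_eq_pow]
  exact iterate_minimalPeriod

theorem card_orbit_zpowers (σ : Equiv.Perm α) (a : α) :
    Nat.card (orbit (Subgroup.zpowers σ) a) = minimalPeriod σ a :=
  (Nat.card_congr (orbitZPowersEquiv σ a)).trans (Nat.card_zmod _)

variable [Fintype α]

theorem sum_comp_orbitRel_mk {G M : Type*} [Group G] [MulAction G α] [AddCommMonoid M]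
    [Fintype (orbitRel.Quotient G α)] (f : orbitRel.Quotient G α → M) :
    ∑ a : α, f (Quotient.mk'' a) = ∑ ω : orbitRel.Quotient G α, Nat.card ω.orbit • f ω := by
  classical
  rw [← Finset.sum_fiberwise Finset.univ (Quotient.mk'' : α → orbitRel.Quotient G α)]
  refine Finset.sum_congr rfl fun (ω : orbitRel.Quotient G α) _ => ?_
  have hfiber : (Finset.univ.filter fun a : α => Quotient.mk'' a = ω).card = Nat.card ω.orbit := by
    rw [← Fintype.card_subtype, ← Nat.card_eq_fintype_card]
    exact Nat.card_congr (Equiv.subtypeEquivRight fun _ => orbitRel.Quotient.mem_orbit.symm)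
  rw [← hfiber, ← Finset.sum_const]
  exact Finset.sum_congr rfl fun a ha => by rw [(Finset.mem_filter.mp ha).2]

theorem sum_inv_card_orbit (G : Type*) [Group G] [MulAction G α] :
    ∑ a : α, (Nat.card (orbit G a) : ℚ)⁻¹ = Nat.card (orbitRel.Quotient G α) := by
  have := Fintype.ofFinite (orbitRel.Quotient G α)
  rw [Nat.card_eq_fintype_card, Fintype.card_eq_sum_ones, Nat.cast_sum]
  refine (sum_comp_orbitRel_mk fun ω : orbitRel.Quotient G α => (Nat.card ω.orbit : ℚ)⁻¹).trans
    (Finset.sum_congr rfl fun (ω : orbitRel.Quotient G α) _ => ?_)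
  have : Nonempty ω.orbit := by
    induction ω using Quotient.inductionOn'
    exact ⟨_, mem_orbit_self _⟩
  rw [nsmul_eq_mul, mul_inv_cancel₀ (Nat.cast_ne_zero.mpr Nat.card_pos.ne'), Nat.cast_one]

theorem card_orbitRel_quotient_zpowers [DecidableEq α] {n : ℕ} (hn : 0 < n) (σ : Equiv.Perm α)
    (hσ : ∀ a ∈ σ.support, minimalPeriod σ a = n) :
    Nat.card (orbitRel.Quotient (Subgroup.zpowers σ) α) = σ.supportᶜ.card + σ.support.card / n := by
  have hsupp : ∑ a ∈ σ.support, (minimalPeriod σ a : ℚ)⁻¹ = σ.support.card * (n : ℚ)⁻¹ := by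
    rw [Finset.sum_congr rfl fun a ha => by rw [hσ a ha], Finset.sum_const, nsmul_eq_mul]
  have hfixed : ∑ a ∈ σ.supportᶜ, (minimalPeriod σ a : ℚ)⁻¹ = σ.supportᶜ.card := by
    rw [Finset.cast_card]
    refine Finset.sum_congr rfl fun a ha => ?_
    have ha' : σ a = a := by simpa using ha
    rw [minimalPeriod_eq_one_iff_isFixedPt.mpr ha', Nat.cast_one, inv_one]
  have hcard := sum_inv_card_orbit (α := α) (Subgroup.zpowers σ)
  simp only [card_orbit_zpowers] at hcard
  rw [← Finset.sum_add_sum_compl σ.support, hsupp, hfixed] at hcard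
  have hn' : (n : ℚ) ≠ 0 := Nat.cast_ne_zero.mpr hn.ne'
  have hmul : σ.support.card + n * σ.supportᶜ.card =
      n * Nat.card (orbitRel.Quotient (Subgroup.zpowers σ) α) := by
    field_simp at hcard
    exact_mod_cast hcard
  rw [← Nat.mul_div_cancel_left (Nat.card _) hn, ← hmul, Nat.add_mul_div_left _ _ hn, add_comm]

theorem card_orbitRel_quotient_zpowers_of_two_fixed {n : ℕ} {σ : Equiv.Perm α} {i₀ i₁ : α}
    (hn : 0 < n) (hne : i₀ ≠ i₁) (hfix : ∀ i, σ i = i ↔ i = i₀ ∨ i = i₁)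
    (horb : ∀ i, i ≠ i₀ → i ≠ i₁ →
      (σ ^ n) i = i ∧ ∀ k : ℕ, 0 < k → k < n → (σ ^ k) i ≠ i) :
    Nat.card (orbitRel.Quotient (Subgroup.zpowers σ) α) = (Fintype.card α - 2) / n + 2 := by
  classical
  have hfixed : σ.supportᶜ = {i₀, i₁} := by
    ext i
    rw [Finset.mem_compl, Equiv.Perm.notMem_support, hfix, Finset.mem_insert, Finset.mem_singleton]
  have hfixed_card : σ.supportᶜ.card = 2 := by rw [hfixed, Finset.card_pair hne]
  have hsupp_card : σ.support.card = Fintype.card α - 2 := by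
    rw [← hfixed_card, Finset.card_compl, Nat.sub_sub_self (Finset.card_le_univ _)]
  have hperiod (i : α) (hi : i ∈ σ.support) : minimalPeriod σ i = n := by
    rw [Equiv.Perm.mem_support, ne_eq, hfix, not_or] at hi
    obtain ⟨hpow, hmin⟩ := horb i hi.1 hi.2
    exact minimalPeriod_eq_of_pow hn hpow hmin
  rw [card_orbitRel_quotient_zpowers hn σ hperiod, hfixed_card, hsupp_card, add_comm]

end Orbits

section InvariantFunctions

variable {α M : Type*}

/-- The functions `α → M` invariant under the action `x ↦ x ∘ σ` of a permutation `σ`. -/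
def invariantFunctions (σ : Equiv.Perm α) (M : Type*) [AddGroup M] : AddSubgroup (α → M) where
  carrier := {x | x ∘ σ = x}
  zero_mem' := rfl
  add_mem' hx hy := congrArg₂ HAdd.hAdd hx hy
  neg_mem' hx := congrArg Neg.neg hx

theorem mem_invariantFunctions [AddGroup M] {σ : Equiv.Perm α} {x : α → M} :
    x ∈ invariantFunctions σ M ↔ x ∘ σ = x :=
  Iff.rfl

theorem apply_smul_of_mem_invariantFunctions [AddGroup M] {σ : Equiv.Perm α} {x : α → M}
    (hx : x ∈ invariantFunctions σ M) (τ : Subgroup.zpowers σ) (a : α) : x (τ • a) = x a := by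
  obtain ⟨_, k, rfl⟩ := τ
  refine zpow_induction_left (P := fun τ : Equiv.Perm α => x (τ a) = x a) rfl
    (fun τ hτ => (congrFun hx _).trans hτ) (fun τ hτ => ?_) k
  rw [← hτ]
  simpa using (congrFun hx (σ⁻¹ (τ a))).symm

/-- Invariant functions are the functions on the set of orbits. -/
def invariantFunctionsEquiv (σ : Equiv.Perm α) (M : Type*) [AddGroup M] :
    invariantFunctions σ M ≃ (orbitRel.Quotient (Subgroup.zpowers σ) α → M) where
  toFun x := Quotient.lift x.1 <| by
    rintro _ a ⟨τ, rfl⟩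
    exact apply_smul_of_mem_invariantFunctions x.2 τ a
  invFun f := ⟨fun a => f (Quotient.mk'' a), funext fun a =>
    congrArg f (Quotient.sound' ⟨⟨σ, Subgroup.mem_zpowers σ⟩, rfl⟩)⟩
  left_inv _ := rfl
  right_inv f := funext fun ω => Quotient.inductionOn' ω fun _ => rfl

theorem card_invariantFunctions [Finite α] (σ : Equiv.Perm α) (M : Type*) [AddGroup M] :
    Nat.card (invariantFunctions σ M) =
      Nat.card M ^ Nat.card (orbitRel.Quotient (Subgroup.zpowers σ) α) := by
  rw [Nat.card_congr (invariantFunctionsEquiv σ M), Nat.card_fun]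

theorem minimalPeriod_nsmul_eq_zero [AddLeftCancelMonoid M] {f : α → α} {x : α → M} {c : M}
    (h : ∀ a, x (f a) = x a + c) (a : α) : minimalPeriod f a • c = 0 := by
  have hsemi : Semiconj x f (· + c) := h
  have := (hsemi.iterate_right (minimalPeriod f a)).eq a
  rw [iterate_minimalPeriod, add_right_iterate_apply] at this
  exact left_eq_add.mp this

end InvariantFunctions

section SpinStructures

variable {α : Type*} {m : ℕ} {σ : Equiv.Perm α}

theorem exists_mem_invariantFunctions_sum_eq [Fintype α] {i : α}
    (hi : (minimalPeriod σ i).Coprime m) (c : ZMod m) :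
    ∃ x ∈ invariantFunctions σ (ZMod m), ∑ a, x a = c := by
  classical
  have := Fintype.ofFinite (orbitRel.Quotient (Subgroup.zpowers σ) α)
  obtain ⟨b, hb⟩ := ((ZMod.isUnit_iff_coprime _ m).mpr hi).dvd (a := c)
  let ω : orbitRel.Quotient (Subgroup.zpowers σ) α := Quotient.mk'' i
  let x := (invariantFunctionsEquiv σ (ZMod m)).symm (Pi.single ω b)
  refine ⟨x, x.2, ?_⟩
  calc ∑ a, x.1 a = ∑ ω' : orbitRel.Quotient (Subgroup.zpowers σ) α,
        Nat.card ω'.orbit • (Pi.single ω b : _ → ZMod m) ω' :=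
        sum_comp_orbitRel_mk (Pi.single ω b : _ → ZMod m)
    _ = Nat.card ω.orbit • b := by
        rw [Finset.sum_eq_single ω, Pi.single_eq_same] <;> simp +contextual
    _ = c := by
        rw [hb, nsmul_eq_mul, orbitRel.Quotient.orbit_mk, card_orbit_zpowers]

theorem card_inf_invariantFunctions_mul [Fintype α] {i : α}
    (hi : (minimalPeriod σ i).Coprime m) {V : AddSubgroup (α → ZMod m)}
    (hV : ∀ x, x ∈ V ↔ ∑ a, x a = 0) :
    Nat.card ↥(invariantFunctions σ (ZMod m) ⊓ V) * m =
      m ^ Nat.card (orbitRel.Quotient (Subgroup.zpowers σ) α) := by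
  let S : (α → ZMod m) →+ ZMod m := ∑ a, Pi.evalAddMonoidHom (fun _ => ZMod m) a
  have hS (x : α → ZMod m) : S x = ∑ a, x a := AddMonoidHom.finsetSum_apply ..
  have hker : V = S.ker := AddSubgroup.ext fun x => by rw [hV, AddMonoidHom.mem_ker, hS]
  have hmap : (invariantFunctions σ (ZMod m)).map S = ⊤ := by
    refine (AddSubgroup.eq_top_iff' _).mpr fun c => ?_
    obtain ⟨x, hx, hxc⟩ := exists_mem_invariantFunctions_sum_eq hi c
    exact ⟨x, hx, (hS x).trans hxc⟩
  have hindex : V.relIndex (invariantFunctions σ (ZMod m)) = m := by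
    rw [hker, AddSubgroup.relIndex_ker, hmap, AddSubgroup.card_top, Nat.card_zmod]
  have hmul := AddSubgroup.relIndex_mul_relIndex ⊥ (invariantFunctions σ (ZMod m) ⊓ V)
    (invariantFunctions σ (ZMod m)) bot_le inf_le_left
  rwa [AddSubgroup.relIndex_bot_left, AddSubgroup.relIndex_bot_left, AddSubgroup.inf_relIndex_left,
    hindex, card_invariantFunctions, Nat.card_zmod] at hmul

theorem closure_coe_eq_one {V : AddSubgroup (α → ZMod m)} (h1 : 1 ∈ V) :
    AddSubgroup.closure {v : V | (v : α → ZMod m) = 1} = AddSubgroup.zmultiples ⟨1, h1⟩ := by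
  rw [AddSubgroup.zmultiples_eq_closure]
  congr 1
  ext v
  exact (Subtype.ext_iff (a2 := ⟨1, h1⟩)).symm

theorem card_zmultiples_one [Nonempty α] {V : AddSubgroup (α → ZMod m)} (h1 : 1 ∈ V) :
    Nat.card (AddSubgroup.zmultiples (⟨1, h1⟩ : V)) = m := by
  rw [Nat.card_zmultiples, AddSubgroup.addOrderOf_mk]
  exact (addOrderOf_injective (Pi.constAddMonoidHom α (ZMod m)) const_injective 1).trans
    (ZMod.addOrderOf_one m)

theorem mk_comp_eq_mk_iff {i : α} (hi : (minimalPeriod σ i).Coprime m)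
    {V : AddSubgroup (α → ZMod m)} (h1 : 1 ∈ V) {x y : V} (hxy : (y : α → ZMod m) = x ∘ σ) :
    (y : V ⧸ AddSubgroup.zmultiples (⟨1, h1⟩ : V)) = x ↔
      (x : α → ZMod m) ∈ invariantFunctions σ (ZMod m) := by
  rw [mem_invariantFunctions, ← hxy]
  refine ⟨fun h => ?_, fun h => congrArg _ (Subtype.ext h)⟩
  obtain ⟨k, hk⟩ := QuotientAddGroup.eq.mp h.symm
  have hshift (a : α) : x.1 (σ a) = x.1 a + (k : ZMod m) := by
    have hka := congrFun (congrArg Subtype.val hk) a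
    simp only [AddSubgroup.coe_zsmul, AddSubgroup.coe_add, AddSubgroup.coe_neg, Pi.smul_apply,
      Pi.add_apply, Pi.neg_apply, Pi.one_apply, hxy, zsmul_one, comp_apply] at hka
    rw [hka, add_neg_cancel_left]
  have hk0 : (k : ZMod m) = 0 := by
    have := minimalPeriod_nsmul_eq_zero hshift i
    rwa [nsmul_eq_mul, ((ZMod.isUnit_iff_coprime _ m).mpr hi).mul_right_eq_zero] at this
  rw [hxy]
  exact funext fun a => by rw [comp_apply, hshift, hk0, add_zero]

theorem card_fixed_quotient_mul {i : α} (hi : (minimalPeriod σ i).Coprime m)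
    {V : AddSubgroup (α → ZMod m)} (h1 : 1 ∈ V) (hσV : ∀ x ∈ V, x ∘ σ ∈ V)
    {σs : V ⧸ AddSubgroup.zmultiples (⟨1, h1⟩ : V) → V ⧸ AddSubgroup.zmultiples (⟨1, h1⟩ : V)}
    (hσs : ∀ x y : V, (y : α → ZMod m) = x ∘ σ →
      σs (QuotientAddGroup.mk x) = QuotientAddGroup.mk y) :
    Nat.card {z | σs z = z} * m = Nat.card ↥(invariantFunctions σ (ZMod m) ⊓ V) := by
  have : Nonempty α := ⟨i⟩
  have hpre : QuotientAddGroup.mk ⁻¹' {z | σs z = z} =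
      ((invariantFunctions σ (ZMod m)).addSubgroupOf V : Set V) := by
    ext x
    have hx : ((⟨x ∘ σ, hσV x x.2⟩ : V) : α → ZMod m) = x ∘ σ := rfl
    rw [Set.mem_preimage, Set.mem_ofPred_eq, hσs x _ hx, mk_comp_eq_mk_iff hi h1 hx]
    rfl
  calc Nat.card {z | σs z = z} * m
      = Nat.card (AddSubgroup.zmultiples (⟨1, h1⟩ : V)) * Nat.card {z | σs z = z} := by
        rw [card_zmultiples_one, mul_comm]
    _ = Nat.card ((invariantFunctions σ (ZMod m)).addSubgroupOf V) := by
        rw [← Nat.card_prod,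
          ← Nat.card_congr (QuotientAddGroup.preimageMkEquivAddSubgroupProdSet _ _), hpre]
        rfl
    _ = Nat.card ↥(invariantFunctions σ (ZMod m) ⊓ V) := by
        rw [← AddSubgroup.addSubgroupOf_map_subtype,
          AddSubgroup.card_map_of_injective V.subtype_injective]

theorem eq_pow_sub_of_mul_pow_eq_pow {N m k q : ℕ} (hm : 0 < m) (h : N * m ^ k = m ^ q) :
    N = m ^ (q - k) := by
  obtain rfl | hm1 := (Nat.succ_le_of_lt hm).eq_or_lt
  · simpa using h
  · have hkq : k ≤ q := (Nat.pow_dvd_pow_iff_le_right hm1).mp ⟨N, by rw [← h, mul_comm]⟩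
    exact Nat.eq_of_mul_eq_mul_right (pow_pos hm k) (by rw [h, ← pow_add, Nat.sub_add_cancel hkq])

end SpinStructures

theorem odd_auto_two_fixed_spin_count_general {α : Type*} [Fintype α] {m : ℕ}
    (hm : m ∣ Fintype.card α) (σ : Equiv.Perm α) (i : α) (hi : (minimalPeriod σ i).Coprime m)
    (V : AddSubgroup (α → ZMod m)) (hV : ∀ x : α → ZMod m, x ∈ V ↔ ∑ a, x a = 0)
    (W : AddSubgroup V) (hW : W = AddSubgroup.closure {v : V | (v : α → ZMod m) = 1})
    (σs : V ⧸ W → V ⧸ W)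
    (hσs : ∀ x y : V, (y : α → ZMod m) = x ∘ σ →
      σs (QuotientAddGroup.mk x) = QuotientAddGroup.mk y) :
    Nat.card {z : V ⧸ W | σs z = z} =
      m ^ (Nat.card (orbitRel.Quotient (Subgroup.zpowers σ) α) - 2) := by
  have h1 : 1 ∈ V := by
    simpa [hV] using (ZMod.natCast_eq_zero_iff _ m).mpr hm
  have hσV (x : α → ZMod m) (hx : x ∈ V) : x ∘ σ ∈ V :=
    (hV _).mpr ((Equiv.sum_comp σ x).trans ((hV x).mp hx))
  obtain rfl := hW.trans (closure_coe_eq_one h1)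
  refine eq_pow_sub_of_mul_pow_eq_pow
    (Nat.pos_of_dvd_of_pos hm (Fintype.card_pos_iff.mpr ⟨i⟩)) ?_
  rw [← card_inf_invariantFunctions_mul hi hV, ← card_fixed_quotient_mul hi h1 hσV hσs,
    pow_two, mul_assoc]

/-- An odd-order automorphism of a hyperelliptic surface of genus `g` fixing exactly two
branch points (modelled as a permutation `σ` of the `2g+2` branch points with exactly two
fixed points, all other orbits having exactly `n` elements, `n` odd) fixes exactly
`2^{2g/n}` two-spin structures, i.e. elements of `J = V ⧸ W`. -/
theorem odd_auto_two_fixed_spin_count (g n : ℕ) (hg : 1 ≤ g) (hn : Odd n) (hn' : 0 < n)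
    (σ : Equiv.Perm (Fin (2 * g + 2))) (i₀ i₁ : Fin (2 * g + 2)) (hne : i₀ ≠ i₁)
    (hfix : ∀ i, σ i = i ↔ (i = i₀ ∨ i = i₁))
    (horb : ∀ i : Fin (2 * g + 2), i ≠ i₀ → i ≠ i₁ →
      (σ ^ n) i = i ∧ ∀ m : ℕ, 0 < m → m < n → (σ ^ m) i ≠ i)
    (V : AddSubgroup (Fin (2 * g + 2) → ZMod 2))
    (hV : ∀ x : Fin (2 * g + 2) → ZMod 2, x ∈ V ↔ ∑ i, x i = 0)
    (W : AddSubgroup ↥V)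
    (hW : W = AddSubgroup.closure {v : ↥V | (v : Fin (2 * g + 2) → ZMod 2) = 1})
    (σs : (↥V ⧸ W) →+ (↥V ⧸ W))
    (hσs : ∀ x y : ↥V, (y : Fin (2 * g + 2) → ZMod 2) = (x : Fin (2 * g + 2) → ZMod 2) ∘ σ →
      σs (QuotientAddGroup.mk x) = QuotientAddGroup.mk y) :
    Nat.card {z : ↥V ⧸ W | σs z = z} = 2 ^ (2 * g / n) := by
  have hcard : Fintype.card (Fin (2 * g + 2)) = 2 * g + 2 := Fintype.card_fin _
  have hi₀ : minimalPeriod σ i₀ = 1 :=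
    minimalPeriod_eq_one_iff_isFixedPt.mpr ((hfix i₀).mpr (.inl rfl))
  rw [odd_auto_two_fixed_spin_count_general (by simp [hcard]) σ i₀ (by simp [hi₀]) V hV W hW
      σs hσs, card_orbitRel_quotient_zpowers_of_two_fixed hn' hne hfix horb, hcard,
    Nat.add_sub_cancel, Nat.add_sub_cancel]
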